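/- Let S₁, S₂ be sets of variable assignments and let B₁, B₂ be box assignments such that there is no box assignment B₁' ⊊ B₁ with S₁ ∩ B₁' = S₁ ∩ B₁, and there is no box assignment B₂' ⊊ B₂ with S₂ ∩ B₂' = S₂ ∩ B₂. Then there is no box assignment B' ⊊ B₁ ⊎ B₂ with (S₁ ∪ S₂) ∩ B' = (S₁ ∪ S₂) ∩ (B₁ ⊎ B₂). (This is the disjunction case in the proof that structural tight consistency implies tight consistency.) -/

import Mathlib

/-!
Boxes are closed under intersection, so tightness of `B` for `S` forces every box containing
`S ∩ B` to contain all of `B`: otherwise its intersection with `B` would be a strictly smaller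
box with the same trace of `S`. A box `B'` with the same trace of `S₁ ∪ S₂` as `B₁ ⊎ B₂` contains
`S₁ ∩ B₁` and `S₂ ∩ B₂`, hence `B₁` and `B₂`, hence `B₁ ⊎ B₂` by minimality of the box union.
-/

open Set

/-- A closed real interval (possibly empty or unbounded): a closed, order-connected set. -/
def IsClosedInterval (s : Set ℝ) : Prop := IsClosed s ∧ s.OrdConnected

/-- The type of closed real intervals. -/
abbrev CInterval : Type := {s : Set ℝ // IsClosedInterval s}

/-- A box assignment: a function from the variables to closed real intervals. -/
structure Box (V : Type) where
  comp : V → CInterval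

/-- The set of variable assignments represented by a box assignment. -/
def Box.pts {V : Type} (B : Box V) : Set (V → ℝ) := {d | ∀ v, d v ∈ (B.comp v).1}

/-- `B.upd x I` is the box assignment equal to `B` except that it assigns `I` to `x`. -/
def Box.upd {V : Type} [DecidableEq V] (B : Box V) (x : V) (I : CInterval) : Box V :=
  ⟨Function.update B.comp x I⟩

/-- The smallest closed interval containing a set of reals. -/
def cIntHull (s : Set ℝ) : Set ℝ := ⋂₀ {t | IsClosedInterval t ∧ s ⊆ t}

theorem isClosedInterval_cIntHull (s : Set ℝ) : IsClosedInterval (cIntHull s) := by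
  constructor
  · exact isClosed_sInter fun t ht => ht.1.1
  · constructor
    intro x hx y hy z hz
    rw [cIntHull, Set.mem_sInter] at *
    intro t ht
    exact ht.1.2.out (hx t ht) (hy t ht) hz

/-- The smallest box assignment containing a given set of variable assignments. -/
noncomputable def canonBox {V : Type} (S : Set (V → ℝ)) : Box V :=
  ⟨fun v => ⟨cIntHull ((fun d => d v) '' S), isClosedInterval_cIntHull _⟩⟩

/-- The box union `B₁ ⊎ B₂`: the smallest box assignment containing both `B₁` and `B₂`. -/
noncomputable def boxUnion {V : Type} (B₁ B₂ : Box V) : Box V := canonBox (B₁.pts ∪ B₂.pts)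

/-- Quantified constraints: atoms `f ≤ g`, `f < g`, `f ≥ g`, `f > g`, conjunction,
disjunction, and bounded quantifiers with closed-interval bounds (no negation). -/
inductive QC (V : Type) : Type where
  | le (f g : (V → ℝ) → ℝ)
  | lt (f g : (V → ℝ) → ℝ)
  | ge (f g : (V → ℝ) → ℝ)
  | gt (f g : (V → ℝ) → ℝ)
  | conj (φ₁ φ₂ : QC V)
  | disj (φ₁ φ₂ : QC V)
  | exQ (x : V) (I : CInterval) (φ : QC V)
  | allQ (x : V) (I : CInterval) (φ : QC V)

/-- The semantics of a quantified constraint: the set of variable assignments making it true. -/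
def QC.sem {V : Type} [DecidableEq V] : QC V → Set (V → ℝ)
  | .le f g => {d | f d ≤ g d}
  | .lt f g => {d | f d < g d}
  | .ge f g => {d | g d ≤ f d}
  | .gt f g => {d | g d < f d}
  | .conj φ₁ φ₂ => φ₁.sem ∩ φ₂.sem
  | .disj φ₁ φ₂ => φ₁.sem ∪ φ₂.sem
  | .exQ x I φ => {d | ∃ r ∈ I.1, Function.update d x r ∈ φ.sem}
  | .allQ x I φ => {d | ∀ r ∈ I.1, Function.update d x r ∈ φ.sem}

/-- The opposite of a quantified constraint: negation pushed down to the atoms. -/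
def QC.opp {V : Type} : QC V → QC V
  | .le f g => .gt f g
  | .lt f g => .ge f g
  | .ge f g => .lt f g
  | .gt f g => .le f g
  | .conj φ₁ φ₂ => .disj φ₁.opp φ₂.opp
  | .disj φ₁ φ₂ => .conj φ₁.opp φ₂.opp
  | .exQ x I φ => .allQ x I φ.opp
  | .allQ x I φ => .exQ x I φ.opp

/-- Atomic constraints. -/
def QC.Atomic {V : Type} : QC V → Prop
  | .le _ _ => True
  | .lt _ _ => True
  | .ge _ _ => True
  | .gt _ _ => True
  | _ => False

/-- A narrowing operator on bounded constraints: contractant, sound, monotone, idempotent. -/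
def IsNarrowing {V : Type} [DecidableEq V] (N : QC V × Box V → QC V × Box V) : Prop :=
  (∀ (φ : QC V) (B : Box V), ((N (φ, B)).2).pts ⊆ B.pts) ∧
  (∀ (φ : QC V) (B : Box V),
    ((N (φ, B)).1).sem ∩ ((N (φ, B)).2).pts = φ.sem ∩ ((N (φ, B)).2).pts) ∧
  (∀ (φ : QC V) (B B' : Box V), B'.pts ⊆ B.pts → ((N (φ, B')).2).pts ⊆ ((N (φ, B)).2).pts) ∧
  (∀ (φ : QC V) (B : Box V), N (N (φ, B)) = N (φ, B))

/-- An outer narrowing operator removes only points outside the solution set. -/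
def IsOuterNarrowing {V : Type} [DecidableEq V] (N : QC V × Box V → QC V × Box V) : Prop :=
  IsNarrowing N ∧ ∀ (φ : QC V) (B : Box V), B.pts ∩ φ.sem ⊆ ((N (φ, B)).2).pts

/-- An inner narrowing operator removes only points inside the solution set. -/
def IsInnerNarrowing {V : Type} [DecidableEq V] (N : QC V × Box V → QC V × Box V) : Prop :=
  IsNarrowing N ∧ ∀ (φ : QC V) (B : Box V), B.pts \ φ.sem ⊆ ((N (φ, B)).2).pts

/-- A narrowing operator on atomic bounded constraints. -/
def IsAtomicNarrowing {V : Type} [DecidableEq V] (A : QC V × Box V → QC V × Box V) : Prop :=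
  (∀ (φ : QC V) (B : Box V), φ.Atomic → ((A (φ, B)).1).Atomic) ∧
  (∀ (φ : QC V) (B : Box V), φ.Atomic → ((A (φ, B)).2).pts ⊆ B.pts) ∧
  (∀ (φ : QC V) (B : Box V), φ.Atomic →
    ((A (φ, B)).1).sem ∩ ((A (φ, B)).2).pts = φ.sem ∩ ((A (φ, B)).2).pts) ∧
  (∀ (φ : QC V) (B B' : Box V), φ.Atomic → B'.pts ⊆ B.pts →
    ((A (φ, B')).2).pts ⊆ ((A (φ, B)).2).pts) ∧
  (∀ (φ : QC V) (B : Box V), φ.Atomic → A (A (φ, B)) = A (φ, B))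

/-- An outer narrowing operator on atomic bounded constraints. -/
def IsAtomicOuterNarrowing {V : Type} [DecidableEq V] (A : QC V × Box V → QC V × Box V) : Prop :=
  IsAtomicNarrowing A ∧
  ∀ (φ : QC V) (B : Box V), φ.Atomic → B.pts ∩ φ.sem ⊆ ((A (φ, B)).2).pts

/-- Finitely contracting: no infinite sequence of bounded constraints where each
constraint part is the output constraint and each bound is a strict subset of the
output bound of the previous application. -/
def FinitelyContracting {V : Type} (A : QC V × Box V → QC V × Box V) : Prop :=
  ¬ ∃ s : ℕ → QC V × Box V, ∀ k : ℕ,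
      (s (k + 1)).1 = (A (s k)).1 ∧ (s (k + 1)).2.pts ⊂ ((A (s k)).2).pts

mutual
  /-- The pruning algorithm `N_A` lifted from an atomic narrowing operator `A`,
  as a relation between inputs and outputs. -/
  inductive NRel {V : Type} [DecidableEq V] (A : QC V × Box V → QC V × Box V) :
      QC V × Box V → QC V × Box V → Prop where
    | atom {φ : QC V} {B : Box V} (h : φ.Atomic) : NRel A (φ, B) (A (φ, B))
    | conj {φ₁ φ₂ ψ₁ ψ₂ : QC V} {B B' : Box V} {n : ℕ} {c : ℕ → QC V × QC V × Box V}
        (h0 : c 0 = (φ₁, φ₂, B)) (hn : c n = (ψ₁, ψ₂, B'))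
        (hstep : ∀ i : ℕ, i < n → ConjStep A (c i) (c (i + 1)))
        (hfix₁ : NRel A (ψ₁, B') (ψ₁, B'))
        (hfix₂ : NRel A (ψ₂, B') (ψ₂, B')) :
        NRel A (QC.conj φ₁ φ₂, B) (QC.conj ψ₁ ψ₂, B')
    | disj {φ₁ φ₂ ψ₁ ψ₂ : QC V} {B B₁ B₂ : Box V}
        (h₁ : NRel A (φ₁, B) (ψ₁, B₁)) (h₂ : NRel A (φ₂, B) (ψ₂, B₂)) :
        NRel A (QC.disj φ₁ φ₂, B) (QC.disj ψ₁ ψ₂, boxUnion B₁ B₂)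
    | exQ {x : V} {I : CInterval} {φ ψ : QC V} {B B' : Box V}
        (h : NRel A (φ, B.upd x I) (ψ, B')) :
        NRel A (QC.exQ x I φ, B) (QC.exQ x (B'.comp x) ψ, B')
    | allQ {x : V} {I : CInterval} {φ ψ : QC V} {B B' : Box V}
        (h : NRel A (φ, B.upd x I) (ψ, B')) :
        NRel A (QC.allQ x I φ, B)
          (QC.allQ x I ψ, canonBox {d : V → ℝ | ∀ r ∈ I.1, Function.update d x r ∈ B'.pts})

  /-- One step of the fixpoint iteration in the conjunction case of `N_A`:
  prune one of the two conjuncts. -/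
  inductive ConjStep {V : Type} [DecidableEq V] (A : QC V × Box V → QC V × Box V) :
      QC V × QC V × Box V → QC V × QC V × Box V → Prop where
    | left {φ₁ φ₂ ψ₁ : QC V} {B B' : Box V} (h : NRel A (φ₁, B) (ψ₁, B')) :
        ConjStep A (φ₁, φ₂, B) (ψ₁, φ₂, B')
    | right {φ₁ φ₂ ψ₂ : QC V} {B B' : Box V} (h : NRel A (φ₂, B) (ψ₂, B')) :
        ConjStep A (φ₁, φ₂, B) (φ₁, ψ₂, B')
end

/-- The consistency property `C` on atomic constraints lifted to quantified constraints. -/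
inductive Lift {V : Type} [DecidableEq V] (C : QC V → Box V → Prop) : QC V → Box V → Prop where
  | atom {φ : QC V} {B : Box V} (h : φ.Atomic) (hC : C φ B) : Lift C φ B
  | conj {φ₁ φ₂ : QC V} {B : Box V} (h₁ : Lift C φ₁ B) (h₂ : Lift C φ₂ B) :
      Lift C (QC.conj φ₁ φ₂) B
  | disj {φ₁ φ₂ : QC V} {B B₁ B₂ : Box V} (hB : B.pts = (boxUnion B₁ B₂).pts)
      (h₁ : Lift C φ₁ B₁) (h₂ : Lift C φ₂ B₂) : Lift C (QC.disj φ₁ φ₂) B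
  | exQ {x : V} {I : CInterval} {φ : QC V} {B : Box V} (h : Lift C φ (B.upd x I)) :
      Lift C (QC.exQ x I φ) B
  | allQ {x : V} {I : CInterval} {φ : QC V} {B : Box V} (h : Lift C φ (B.upd x I)) :
      Lift C (QC.allQ x I φ) B

/-- The degree of truth of a quantified constraint, with values in the extended reals. -/
noncomputable def QC.deg {V : Type} [DecidableEq V] : QC V → (V → ℝ) → EReal
  | .le f g => fun d => ((g d - f d : ℝ) : EReal)
  | .lt f g => fun d => ((g d - f d : ℝ) : EReal)
  | .ge f g => fun d => ((f d - g d : ℝ) : EReal)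
  | .gt f g => fun d => ((f d - g d : ℝ) : EReal)
  | .conj φ₁ φ₂ => fun d => min (φ₁.deg d) (φ₂.deg d)
  | .disj φ₁ φ₂ => fun d => max (φ₁.deg d) (φ₂.deg d)
  | .exQ x I φ => fun d => ⨆ r ∈ I.1, φ.deg (Function.update d x r)
  | .allQ x I φ => fun d => ⨅ r ∈ I.1, φ.deg (Function.update d x r)

/-- A converging atomic (outer) narrowing operator. -/
def Converging {V : Type} [DecidableEq V] (A : QC V × Box V → QC V × Box V) : Prop :=
  ∀ φ : QC V, φ.Atomic → ∀ Bs : ℕ → Box V,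
    (∀ i, (Bs (i + 1)).pts ⊆ (Bs i).pts) →
    ∀ d : V → ℝ, (⋂ i, (Bs i).pts) = {d} → φ.deg d < 0 →
    ∃ k, ∀ l, k ≤ l → ((A (φ, Bs l)).2).pts = ∅

/-- One branching step: split a quantifier bound of some subconstraint. -/
inductive Branch {V : Type} : QC V → QC V → Prop where
  | allSplit {x : V} {I I₁ I₂ : CInterval} {φ : QC V} (h : I.1 = I₁.1 ∪ I₂.1) :
      Branch (QC.allQ x I φ) (QC.conj (QC.allQ x I₁ φ) (QC.allQ x I₂ φ))
  | exSplit {x : V} {I I₁ I₂ : CInterval} {φ : QC V} (h : I.1 = I₁.1 ∪ I₂.1) :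
      Branch (QC.exQ x I φ) (QC.disj (QC.exQ x I₁ φ) (QC.exQ x I₂ φ))
  | conjL {φ₁ φ₁' φ₂ : QC V} (h : Branch φ₁ φ₁') : Branch (QC.conj φ₁ φ₂) (QC.conj φ₁' φ₂)
  | conjR {φ₁ φ₂ φ₂' : QC V} (h : Branch φ₂ φ₂') : Branch (QC.conj φ₁ φ₂) (QC.conj φ₁ φ₂')
  | disjL {φ₁ φ₁' φ₂ : QC V} (h : Branch φ₁ φ₁') : Branch (QC.disj φ₁ φ₂) (QC.disj φ₁' φ₂)
  | disjR {φ₁ φ₂ φ₂' : QC V} (h : Branch φ₂ φ₂') : Branch (QC.disj φ₁ φ₂) (QC.disj φ₁ φ₂')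
  | exCong {x : V} {I : CInterval} {φ φ' : QC V} (h : Branch φ φ') :
      Branch (QC.exQ x I φ) (QC.exQ x I φ')
  | allCong {x : V} {I : CInterval} {φ φ' : QC V} (h : Branch φ φ') :
      Branch (QC.allQ x I φ) (QC.allQ x I φ')

/-- All quantification intervals of the constraint have diameter (length) at most `ε`. -/
def QC.smallQ {V : Type} (ε : ENNReal) : QC V → Prop
  | .conj φ₁ φ₂ => φ₁.smallQ ε ∧ φ₂.smallQ ε
  | .disj φ₁ φ₂ => φ₁.smallQ ε ∧ φ₂.smallQ ε
  | .exQ _ I φ => EMetric.diam I.1 ≤ ε ∧ φ.smallQ ε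
  | .allQ _ I φ => EMetric.diam I.1 ≤ ε ∧ φ.smallQ ε
  | _ => True

/-- The box assignment assigning all of ℝ to every variable. -/
def topBox (V : Type) : Box V :=
  ⟨fun _ => ⟨Set.univ, ⟨isClosed_univ, Set.ordConnected_univ⟩⟩⟩

/-- The componentwise intersection of two box assignments. -/
def Box.inter {V : Type} (B C : Box V) : Box V :=
  ⟨fun v => ⟨(B.comp v).1 ∩ (C.comp v).1,
    (B.comp v).2.1.inter (C.comp v).2.1, (B.comp v).2.2.inter (C.comp v).2.2⟩⟩

theorem Box.pts_inter {V : Type} (B C : Box V) : (B.inter C).pts = B.pts ∩ C.pts := by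
  ext d
  exact forall_and

theorem subset_pts_canonBox {V : Type} (S : Set (V → ℝ)) : S ⊆ (canonBox S).pts :=
  fun d hd v _ ht => ht.2 ⟨d, hd, rfl⟩

theorem pts_canonBox_subset {V : Type} {S : Set (V → ℝ)} {B : Box V} (h : S ⊆ B.pts) :
    (canonBox S).pts ⊆ B.pts := by
  intro d hd v
  refine hd v _ ⟨(B.comp v).2, ?_⟩
  rintro _ ⟨e, he, rfl⟩
  exact h he v

/-- If `B` is tight for `S`, every box containing `S ∩ B` contains `B`. -/
theorem pts_subset_of_tight {V : Type} {S : Set (V → ℝ)} {B C : Box V}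
    (h : ¬ ∃ B' : Box V, B'.pts ⊂ B.pts ∧ S ∩ B'.pts = S ∩ B.pts)
    (hC : S ∩ B.pts ⊆ C.pts) : B.pts ⊆ C.pts := by
  by_contra hBC
  refine h ⟨C.inter B, ?_, ?_⟩ <;> rw [Box.pts_inter]
  · exact ⟨inter_subset_right, fun hB => hBC fun d hd => (hB hd).1⟩
  · ext d
    exact ⟨fun hd => ⟨hd.1, hd.2.2⟩, fun hd => ⟨hd.1, hC hd, hd.2⟩⟩

theorem tight_disj {V : Type} (S₁ S₂ : Set (V → ℝ)) (B₁ B₂ : Box V)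
    (h₁ : ¬ ∃ B' : Box V, B'.pts ⊂ B₁.pts ∧ S₁ ∩ B'.pts = S₁ ∩ B₁.pts)
    (h₂ : ¬ ∃ B' : Box V, B'.pts ⊂ B₂.pts ∧ S₂ ∩ B'.pts = S₂ ∩ B₂.pts) :
    ¬ ∃ B' : Box V, B'.pts ⊂ (boxUnion B₁ B₂).pts ∧
      (S₁ ∪ S₂) ∩ B'.pts = (S₁ ∪ S₂) ∩ (boxUnion B₁ B₂).pts := by
  rintro ⟨B', hlt, heq⟩
  have hU : B₁.pts ∪ B₂.pts ⊆ (boxUnion B₁ B₂).pts := subset_pts_canonBox _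
  refine hlt.2 (pts_canonBox_subset (union_subset ?_ ?_))
  · exact pts_subset_of_tight h₁ fun d hd => (heq.ge ⟨Or.inl hd.1, hU (Or.inl hd.2)⟩).2
  · exact pts_subset_of_tight h₂ fun d hd => (heq.ge ⟨Or.inr hd.1, hU (Or.inr hd.2)⟩).2
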